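/- Let α be a type with decidable equality, let L be a multiset over α with card m, and let Vc be a finite set (Finset) of elements of α with card c ≥ 1. Suppose that the number of elements of L, counted with multiplicity, that do not belong to Vc is at most f, and that f·(c+1) < m. Then every element u of α whose multiplicity in L is greatest (i.e., Multiset.count u L ≥ Multiset.count x L for all x : α) belongs to Vc. In particular, the mode of L (a most-frequent element, with ties broken arbitrarily) lies in Vc. -/

import Mathlib

/-!
At most `f` entries lie outside `Vc`, so every value outside `Vc` has multiplicity at most `f`.
More than `c * f` entries are left for the `c` values of `Vc`, so by the pigeonhole principle one of
these has multiplicity greater than `f` and beats every value outside `Vc`.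
-/

section Multiplicity

variable {α : Type*} [DecidableEq α]

theorem count_le_card_filter {p : α → Prop} [DecidablePred p] {a : α} (L : Multiset α) (ha : p a) :
    L.count a ≤ (L.filter p).card :=
  Multiset.count_filter_of_pos ha ▸ Multiset.count_le_card a (L.filter p)

theorem card_filter_mem_eq_sum_count (L : Multiset α) (s : Finset α) :
    (L.filter (· ∈ s)).card = ∑ x ∈ s, L.count x := by
  rw [← Multiset.sum_count_eq_card fun _ ha ↦ Multiset.of_mem_filter ha]
  exact Finset.sum_congr rfl fun _ hx ↦ Multiset.count_filter_of_pos hx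

theorem exists_mem_lt_count_of_card_mul_add_lt_card {L : Multiset α} {s : Finset α} {n : ℕ}
    (h : s.card * n + (L.filter (· ∉ s)).card < L.card) : ∃ x ∈ s, n < L.count x := by
  have hsplit : (L.filter (· ∈ s)).card + (L.filter (· ∉ s)).card = L.card := by
    rw [← Multiset.card_add, Multiset.filter_add_not]
  refine Finset.exists_lt_of_sum_lt ?_
  rw [Finset.sum_const, smul_eq_mul, ← card_filter_mem_eq_sum_count]
  lia

end Multiplicity

theorem mode_in_correct_values {α : Type*} [DecidableEq α]
    (L : Multiset α) (Vc : Finset α) (m c f : ℕ)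
    (hm : Multiset.card L = m) (hc : Vc.card = c) (hc1 : 1 ≤ c)
    (hf : (L.filter (· ∉ Vc)).card ≤ f)
    (hres : f * (c + 1) < m) :
    ∀ u : α, (∀ x : α, Multiset.count x L ≤ Multiset.count u L) → u ∈ Vc := by
  subst hm hc
  intro u hmode
  have hcard : Vc.card * f + (L.filter (· ∉ Vc)).card < L.card := by
    calc Vc.card * f + (L.filter (· ∉ Vc)).card ≤ Vc.card * f + f := by gcongr
      _ = f * (Vc.card + 1) := by ring
      _ < L.card := hres
  obtain ⟨x, -, hx⟩ := exists_mem_lt_count_of_card_mul_add_lt_card hcard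
  by_contra hu
  have hcount : L.count u ≤ f := (count_le_card_filter L hu).trans hf
  exact (hx.trans_le (hmode x)).not_ge hcount
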